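/- Suppose the ground truth reward r_G satisfies the reward structure assumption and the feature vectors satisfy the negative-inner-product feature assumption. Fix y_bad ∈ Y_bad and assume: (i) π_{θ_0}(y_med) > π_{θ_0}(y) for all y ≠ y_med; (ii) π_{θ_0}(y_⋆) ≤ Δ2 · π_{θ_0}(Y_bad) / Δ1; (iii) θ_0 = C · (φ(y_bad) − φ(y_⋆)) for some C > max{0, −ln(ζ)/‖φ(y_bad) − φ(y_⋆)‖²}, where ζ := [(ln π_{θ_0}(y_med) − ln π_{θ_0}(y_bad)) / (ln π_{θ_0}(y_med) − ln π_{θ_0}(y_⋆))] · [(V_G(θ_0) − r_G(y_bad)) / (r_G(y_⋆) − V_G(θ_0))] > 0. If θ_t is the gradient flow maximizing V_G, then V_G(θ_t) < r_G(y_med) for all t ≥ 0. -/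

import Mathlib

open scoped BigOperators RealInnerProductSpace

noncomputable def policy {Y : Type*} [Fintype Y] {D : ℕ}
    (φ : Y → EuclideanSpace ℝ (Fin D)) (θ : EuclideanSpace ℝ (Fin D)) (y : Y) : ℝ :=
  Real.exp ⟪φ y, θ⟫ / ∑ z, Real.exp ⟪φ z, θ⟫

noncomputable def expReward {Y : Type*} [Fintype Y] {D : ℕ}
    (φ : Y → EuclideanSpace ℝ (Fin D)) (r : Y → ℝ) (θ : EuclideanSpace ℝ (Fin D)) : ℝ :=
  ∑ y, policy φ θ y * r y

section helpers

variable {Y : Type*} [Fintype Y] {D : ℕ}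

noncomputable def gradV (φ : Y → EuclideanSpace ℝ (Fin D)) (r : Y → ℝ)
    (θ : EuclideanSpace ℝ (Fin D)) : EuclideanSpace ℝ (Fin D) :=
  ∑ y, (policy φ θ y * (r y - expReward φ r θ)) • φ y

lemma Z_pos [Nonempty Y] (φ : Y → EuclideanSpace ℝ (Fin D)) (θ : EuclideanSpace ℝ (Fin D)) :
    0 < ∑ z, Real.exp ⟪φ z, θ⟫ :=
  Finset.sum_pos (fun _ _ => Real.exp_pos _) Finset.univ_nonempty

lemma policy_pos [Nonempty Y] (φ : Y → EuclideanSpace ℝ (Fin D))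
    (θ : EuclideanSpace ℝ (Fin D)) (y : Y) : 0 < policy φ θ y :=
  div_pos (Real.exp_pos _) (Z_pos φ θ)

lemma policy_sum [Nonempty Y] (φ : Y → EuclideanSpace ℝ (Fin D))
    (θ : EuclideanSpace ℝ (Fin D)) : ∑ y, policy φ θ y = 1 := by
  unfold policy
  rw [← Finset.sum_div]
  exact div_self (Z_pos φ θ).ne'

lemma expReward_eq (φ : Y → EuclideanSpace ℝ (Fin D)) (r : Y → ℝ)
    (θ : EuclideanSpace ℝ (Fin D)) :
    expReward φ r θ = (∑ y, Real.exp ⟪φ y, θ⟫ * r y) / ∑ z, Real.exp ⟪φ z, θ⟫ := by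
  unfold expReward policy
  rw [Finset.sum_div]
  exact Finset.sum_congr rfl fun y _ => by ring

lemma weight_sum [Nonempty Y] (φ : Y → EuclideanSpace ℝ (Fin D)) (r : Y → ℝ)
    (θ : EuclideanSpace ℝ (Fin D)) :
    ∑ y, policy φ θ y * (r y - expReward φ r θ) = 0 := by
  simp only [mul_sub, Finset.sum_sub_distrib]
  rw [← Finset.sum_mul, policy_sum]
  simp [expReward]

lemma hasGradient [Nonempty Y] (φ : Y → EuclideanSpace ℝ (Fin D)) (r : Y → ℝ)
    (θ : EuclideanSpace ℝ (Fin D)) :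
    HasGradientAt (expReward φ r) (gradV φ r θ) θ := by
  rw [hasGradientAt_iff_hasFDerivAt]
  have hl : ∀ y, HasFDerivAt (fun θ => Real.exp ⟪φ y, θ⟫)
      (Real.exp ⟪φ y, θ⟫ • (innerSL ℝ (φ y))) θ := fun y =>
    ((innerSL ℝ (φ y)).hasFDerivAt (x := θ)).exp
  have hN : HasFDerivAt (fun θ => ∑ y, Real.exp ⟪φ y, θ⟫ * r y)
      (∑ y, r y • (Real.exp ⟪φ y, θ⟫ • (innerSL ℝ (φ y)))) θ :=
    HasFDerivAt.fun_sum fun y _ => (hl y).mul_const (r y)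
  have hZ : HasFDerivAt (fun θ => ∑ y, Real.exp ⟪φ y, θ⟫)
      (∑ y, (Real.exp ⟪φ y, θ⟫ • (innerSL ℝ (φ y)))) θ :=
    HasFDerivAt.fun_sum fun y _ => (hl y)
  have hZ0 := (Z_pos φ θ).ne'
  have h := hN.mul ((hasDerivAt_inv hZ0).comp_hasFDerivAt θ hZ)
  have he : expReward φ r = fun θ =>
    (∑ y, Real.exp ⟪φ y, θ⟫ * r y) * (∑ z, Real.exp ⟪φ z, θ⟫)⁻¹ := by
    funext θ; rw [expReward_eq, div_eq_mul_inv]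
  rw [he]
  refine h.congr_fderiv ?_
  ext v
  simp only [InnerProductSpace.toDual_apply_apply, gradV, sum_inner, inner_smul_left,
    expReward_eq, policy]
  simp
  set Z := ∑ z, Real.exp ⟪φ z, θ⟫ with hZd
  set N := ∑ y, Real.exp ⟪φ y, θ⟫ * r y with hNd
  rw [Finset.mul_sum, Finset.mul_sum, Finset.mul_sum, ← Finset.sum_neg_distrib,
    ← Finset.sum_add_distrib]
  refine Finset.sum_congr rfl fun y _ => ?_
  field_simp
  ring

end helpers

theorem neg_inner_product_fail {Y : Type*} [Fintype Y] {D : ℕ}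
    (φ : Y → EuclideanSpace ℝ (Fin D)) (hφ : ∀ y, φ y ≠ 0)
    (rG : Y → ℝ) (hrG : ∀ y, rG y ∈ Set.Icc (-1 : ℝ) 1)
    (ystar ymed ybad : Y) (Ybad : Finset Y) (hybad : ybad ∈ Ybad)
    (hsm : ystar ≠ ymed) (hsb : ystar ∉ Ybad) (hmb : ymed ∉ Ybad)
    (hcover : ∀ y : Y, y = ystar ∨ y = ymed ∨ y ∈ Ybad)
    (hr1 : rG ymed < rG ystar) (hr2 : 0 < rG ymed)
    (hr3 : ∀ y ∈ Ybad, rG y ≤ 0)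
    (hr4 : ∀ y ∈ Ybad, rG y = rG ybad)
    (Δ1 Δ2 : ℝ) (hΔ1 : Δ1 = rG ystar - rG ymed) (hΔ2 : Δ2 = rG ymed - rG ybad)
    (s : ℝ) (hs : s = ⟪φ ystar, φ ymed⟫) (hsneg : s < 0)
    (horthbad : ∀ yb ∈ Ybad, ∀ y : Y, y ≠ yb → ⟪φ yb, φ y⟫ = 0)
    (hnormbad : ∀ yb ∈ Ybad, ‖φ yb‖ ≤ ‖φ ymed‖)
    (θt : ℝ → EuclideanSpace ℝ (Fin D))
    (hflow : ∀ t : ℝ, 0 ≤ t → HasDerivAt θt (gradient (expReward φ rG) (θt t)) t)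
    (hmax : ∀ y : Y, y ≠ ymed → policy φ (θt 0) y < policy φ (θt 0) ymed)
    (hsmall : policy φ (θt 0) ystar ≤ Δ2 * (∑ y ∈ Ybad, policy φ (θt 0) y) / Δ1)
    (C ζ : ℝ)
    (hζ : ζ = (Real.log (policy φ (θt 0) ymed) - Real.log (policy φ (θt 0) ybad))
          / (Real.log (policy φ (θt 0) ymed) - Real.log (policy φ (θt 0) ystar))
          * ((expReward φ rG (θt 0) - rG ybad) / (rG ystar - expReward φ rG (θt 0))))
    (hζpos : 0 < ζ)
    (hC : max 0 (-Real.log ζ / ‖φ ybad - φ ystar‖ ^ 2) < C)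
    (hθ0 : θt 0 = C • (φ ybad - φ ystar)) :
    ∀ t : ℝ, 0 ≤ t → expReward φ rG (θt t) < rG ymed := by
  classical
  haveI : Nonempty Y := ⟨ystar⟩
  have hgrad : ∀ θ, gradient (expReward φ rG) θ = gradV φ rG θ := fun θ =>
    (hasGradient φ rG θ).gradient
  have hbs : ybad ≠ ystar := fun h => hsb (h ▸ hybad)
  have hbm : ybad ≠ ymed := fun h => hmb (h ▸ hybad)
  have hrb : rG ybad ≤ 0 := hr3 ybad hybad
  -- splitting sums
  have hsplit : ∀ f : Y → ℝ, ∑ y, f y = f ystar + (f ymed + ∑ y ∈ Ybad, f y) := by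
    intro f
    have hu : (Finset.univ : Finset Y) = insert ystar (insert ymed Ybad) := by
      ext y
      simpa using hcover y
    rw [hu, Finset.sum_insert (by simp [hsm, hsb]), Finset.sum_insert hmb]
  -- bounds on the expected reward
  have hVlt : ∀ θ, expReward φ rG θ < rG ystar := by
    intro θ
    have h1 : ∑ y, policy φ θ y * rG y < ∑ y, policy φ θ y * rG ystar := by
      refine Finset.sum_lt_sum (fun y _ => ?_) ⟨ybad, Finset.mem_univ _, ?_⟩
      · refine mul_le_mul_of_nonneg_left ?_ (policy_pos φ θ y).le
        rcases hcover y with h | h | h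
        · rw [h]
        · rw [h]; exact hr1.le
        · linarith [hr3 y h]
      · exact mul_lt_mul_of_pos_left (by linarith) (policy_pos φ θ _)
    rw [← Finset.sum_mul, policy_sum, one_mul] at h1
    exact h1
  have hVgt : ∀ θ, rG ybad < expReward φ rG θ := by
    intro θ
    have h1 : ∑ y, policy φ θ y * rG ybad < ∑ y, policy φ θ y * rG y := by
      refine Finset.sum_lt_sum (fun y _ => ?_) ⟨ystar, Finset.mem_univ _, ?_⟩
      · refine mul_le_mul_of_nonneg_left ?_ (policy_pos φ θ y).le
        rcases hcover y with h | h | h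
        · rw [h]; linarith
        · rw [h]; linarith
        · rw [hr4 y h]
      · exact mul_lt_mul_of_pos_left (by linarith) (policy_pos φ θ _)
    rw [← Finset.sum_mul, policy_sum, one_mul] at h1
    exact h1
  -- the two logit derivatives
  have hia : ∀ θ, ⟪φ ystar, gradV φ rG θ⟫
      = policy φ θ ystar * (rG ystar - expReward φ rG θ) * ‖φ ystar‖ ^ 2
        + policy φ θ ymed * (rG ymed - expReward φ rG θ) * s := by
    intro θ
    unfold gradV
    simp only [inner_sum, inner_smul_right]
    rw [hsplit, Finset.sum_eq_zero, hs, real_inner_self_eq_norm_sq]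
    · ring
    · intro y hy
      rw [real_inner_comm, horthbad y hy ystar (fun h => hsb (h ▸ hy)), mul_zero]
  have hib : ∀ θ, ⟪φ ybad, gradV φ rG θ⟫
      = - (policy φ θ ybad * (expReward φ rG θ - rG ybad) * ‖φ ybad‖ ^ 2) := by
    intro θ
    unfold gradV
    simp only [inner_sum, inner_smul_right]
    rw [Finset.sum_eq_single ybad, real_inner_self_eq_norm_sq]
    · ring
    · intro y _ hy
      rw [horthbad ybad hybad y hy, mul_zero]
    · simp
  -- the conservation law: the medium weight dominates
  have hM : ∀ θ, policy φ θ ybad * (expReward φ rG θ - rG ybad)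
      - policy φ θ ystar * (rG ystar - expReward φ rG θ)
      ≤ policy φ θ ymed * (rG ymed - expReward φ rG θ) := by
    intro θ
    have h0 := weight_sum φ rG θ
    rw [hsplit] at h0
    have h1 : policy φ θ ybad * (expReward φ rG θ - rG ybad)
        ≤ ∑ y ∈ Ybad, policy φ θ y * (expReward φ rG θ - rG y) := by
      refine Finset.single_le_sum (f := fun y => policy φ θ y * (expReward φ rG θ - rG y))
        (fun y hy => ?_) hybad
      have := hVgt θ
      rw [hr4 y hy]
      exact mul_nonneg (policy_pos φ θ y).le (by linarith)
    have h2 : ∑ y ∈ Ybad, policy φ θ y * (rG y - expReward φ rG θ)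
        = - ∑ y ∈ Ybad, policy φ θ y * (expReward φ rG θ - rG y) := by
      rw [← Finset.sum_neg_distrib]
      exact Finset.sum_congr rfl fun y _ => by ring
    linarith
  -- policy ratios
  have hlogdiff : ∀ θ x y, Real.log (policy φ θ x) - Real.log (policy φ θ y)
      = ⟪φ x, θ⟫ - ⟪φ y, θ⟫ := by
    intro θ x y
    have hZ := (Z_pos φ θ).ne'
    unfold policy
    rw [Real.log_div (Real.exp_ne_zero _) hZ, Real.log_div (Real.exp_ne_zero _) hZ,
      Real.log_exp, Real.log_exp]
    ring
  have hC0 : 0 < C := lt_of_le_of_lt (le_max_left _ _) hC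
  have hC1 : -Real.log ζ / ‖φ ybad - φ ystar‖ ^ 2 < C := lt_of_le_of_lt (le_max_right _ _) hC
  have oba : ⟪φ ybad, φ ystar⟫ = 0 := horthbad ybad hybad ystar hbs.symm
  have oab : ⟪φ ystar, φ ybad⟫ = 0 := by rw [real_inner_comm]; exact oba
  have omb : ⟪φ ymed, φ ybad⟫ = 0 := by
    rw [real_inner_comm]; exact horthbad ybad hybad ymed hbm.symm
  have la0 : ⟪φ ystar, θt 0⟫ = - C * ‖φ ystar‖ ^ 2 := by
    rw [hθ0, inner_smul_right, inner_sub_right, oab, real_inner_self_eq_norm_sq]; ring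
  have lb0 : ⟪φ ybad, θt 0⟫ = C * ‖φ ybad‖ ^ 2 := by
    rw [hθ0, inner_smul_right, inner_sub_right, oba, real_inner_self_eq_norm_sq]; ring
  have lm0 : ⟪φ ymed, θt 0⟫ = - C * s := by
    rw [hθ0, inner_smul_right, inner_sub_right, omb, real_inner_comm, ← hs]; ring
  have hnorm : ‖φ ybad - φ ystar‖ ^ 2 = ‖φ ybad‖ ^ 2 + ‖φ ystar‖ ^ 2 := by
    rw [norm_sub_sq_real, oba]; ring
  have hna : 0 < ‖φ ystar‖ ^ 2 := by have := norm_pos_iff.mpr (hφ ystar); positivity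
  have hnb : 0 < ‖φ ybad‖ ^ 2 := by have := norm_pos_iff.mpr (hφ ybad); positivity
  have hQ : 0 < -s - ‖φ ybad‖ ^ 2 := by
    have h1 := Real.log_lt_log (policy_pos φ (θt 0) ybad) (hmax ybad hbm)
    have h2 := hlogdiff (θt 0) ymed ybad
    rw [lm0, lb0] at h2
    have h3 : 0 < C * (-s - ‖φ ybad‖ ^ 2) := by nlinarith
    exact pos_of_mul_pos_right h3 hC0.le
  have hP : 0 < -s + ‖φ ystar‖ ^ 2 := by linarith
  -- the barrier function
  set P := -s + ‖φ ystar‖ ^ 2 with hPd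
  set Q := -s - ‖φ ybad‖ ^ 2 with hQd
  set V : ℝ → ℝ := fun t => expReward φ rG (θt t) with hVd
  set g : ℝ → ℝ := fun t => ⟪φ ystar, θt t⟫ - ⟪φ ybad, θt t⟫
    + (Real.log (rG ystar - V t) - Real.log (V t - rG ybad)) with hgd
  have hV1 : ∀ t, 0 < rG ystar - V t := fun t => by have := hVlt (θt t); simp only [hVd]; linarith
  have hV2 : ∀ t, 0 < V t - rG ybad := fun t => by have := hVgt (θt t); simp only [hVd]; linarith
  have hglog : ∀ t, g t = Real.log (policy φ (θt t) ystar * (rG ystar - V t))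
      - Real.log (policy φ (θt t) ybad * (V t - rG ybad)) := by
    intro t
    rw [Real.log_mul (policy_pos φ _ _).ne' (hV1 t).ne',
      Real.log_mul (policy_pos φ _ _).ne' (hV2 t).ne']
    have := hlogdiff (θt t) ystar ybad
    simp only [hgd]
    linarith
  -- below the barrier, the weighted inequality holds
  have hbelow : ∀ t, g t < Real.log Q - Real.log P →
      policy φ (θt t) ystar * (rG ystar - V t) * P
        < policy φ (θt t) ybad * (V t - rG ybad) * Q := by
    intro t ht
    have p1 := mul_pos (policy_pos φ (θt t) ystar) (hV1 t)
    have p2 := mul_pos (policy_pos φ (θt t) ybad) (hV2 t)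
    rw [hglog t] at ht
    rw [← Real.log_lt_log_iff (mul_pos p1 hP) (mul_pos p2 hQ), Real.log_mul p1.ne' hP.ne',
      Real.log_mul p2.ne' hQ.ne']
    linarith
  -- initial condition
  have hg0 : g 0 < Real.log Q - Real.log P := by
    have hz : Real.log ζ = Real.log Q - Real.log P
        + (Real.log (V 0 - rG ybad) - Real.log (rG ystar - V 0)) := by
      have e1 : ζ = Q / P * ((V 0 - rG ybad) / (rG ystar - V 0)) := by
        rw [hζ, hlogdiff, hlogdiff, lm0, lb0, la0]
        have : (-C * s - C * ‖φ ybad‖ ^ 2) / (-C * s - -C * ‖φ ystar‖ ^ 2) = Q / P := by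
          rw [show -C * s - C * ‖φ ybad‖ ^ 2 = C * Q by rw [hQd]; ring,
            show -C * s - -C * ‖φ ystar‖ ^ 2 = C * P by rw [hPd]; ring]
          exact mul_div_mul_left _ _ hC0.ne'
        rw [this]
      rw [e1, Real.log_mul (div_pos hQ hP).ne' (div_pos (hV2 0) (hV1 0)).ne',
        Real.log_div hQ.ne' hP.ne', Real.log_div (hV2 0).ne' (hV1 0).ne']
    rw [hnorm, div_lt_iff₀ (by positivity)] at hC1
    have : g 0 = - C * ‖φ ystar‖ ^ 2 - C * ‖φ ybad‖ ^ 2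
      + (Real.log (rG ystar - V 0) - Real.log (V 0 - rG ybad)) := by
      simp only [hgd, la0, lb0]
    rw [this]
    linarith
  -- derivatives
  have hθ' : ∀ t, 0 ≤ t → HasDerivAt θt (gradV φ rG (θt t)) t := fun t ht => by
    have := hflow t ht
    rwa [hgrad] at this
  have hVder : ∀ t, 0 ≤ t → HasDerivAt V (‖gradV φ rG (θt t)‖ ^ 2) t := by
    intro t ht
    have h1 := (hasGradient φ rG (θt t)).hasFDerivAt.comp_hasDerivAt t (hθ' t ht)
    rw [InnerProductSpace.toDual_apply_apply, real_inner_self_eq_norm_sq] at h1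
    exact h1
  have hlder : ∀ y t, 0 ≤ t →
      HasDerivAt (fun t => ⟪φ y, θt t⟫) ⟪φ y, gradV φ rG (θt t)⟫ t := by
    intro y t ht
    exact (innerSL ℝ (φ y)).hasFDerivAt.comp_hasDerivAt t (hθ' t ht)
  set g' : ℝ → ℝ := fun t => ⟪φ ystar, gradV φ rG (θt t)⟫ - ⟪φ ybad, gradV φ rG (θt t)⟫
    + ((-‖gradV φ rG (θt t)‖ ^ 2) / (rG ystar - V t)
      - ‖gradV φ rG (θt t)‖ ^ 2 / (V t - rG ybad)) with hg'd
  have hgder : ∀ t, 0 ≤ t → HasDerivAt g (g' t) t := by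
    intro t ht
    exact ((hlder ystar t ht).sub (hlder ybad t ht)).add
      ((((hVder t ht).const_sub (rG ystar)).log (hV1 t).ne').sub
        (((hVder t ht).sub_const (rG ybad)).log (hV2 t).ne'))
  have hg'neg : ∀ t, g t < Real.log Q - Real.log P → g' t < 0 := by
    intro t ht
    have h1 := hbelow t ht
    have h2 : (-‖gradV φ rG (θt t)‖ ^ 2) / (rG ystar - V t) ≤ 0 :=
      div_nonpos_of_nonpos_of_nonneg (by simp) (hV1 t).le
    have h3 : 0 ≤ ‖gradV φ rG (θt t)‖ ^ 2 / (V t - rG ybad) :=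
      div_nonneg (by positivity) (hV2 t).le
    have h4 := hM (θt t)
    have h5 := hia (θt t)
    have h6 := hib (θt t)
    have h7 := mul_le_mul_of_nonneg_right h4 (by linarith : 0 ≤ -s)
    simp only [hVd, hPd, hQd] at h1
    have h8 : ⟪φ ystar, gradV φ rG (θt t)⟫ - ⟪φ ybad, gradV φ rG (θt t)⟫ < 0 := by
      rw [h5, h6]
      linarith
    simp only [hg'd]
    linarith
  intro t ht
  obtain ⟨K, hK1, hK2⟩ := exists_between hg0
  have hle : g t ≤ K := by
    refine image_le_of_deriv_right_lt_deriv_boundary (f := g) (f' := g') (a := 0) (b := t)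
      (B := fun _ => K) (B' := fun _ => 0) ?_ ?_ hK1.le ?_ ?_ ⟨ht, le_rfl⟩
    · exact fun x hx => (hgder x hx.1).continuousAt.continuousWithinAt
    · exact fun x hx => (hgder x hx.1).hasDerivWithinAt
    · exact fun x => hasDerivAt_const x K
    · intro x _ hx
      exact hg'neg x (hx ▸ hK2)
  have hb := hbelow t (lt_of_le_of_lt hle hK2)
  have hm := hM (θt t)
  have p1 := mul_pos (policy_pos φ (θt t) ystar) (hV1 t)
  have p2 := mul_pos (policy_pos φ (θt t) ybad) (hV2 t)
  have hQP : Q < P := by rw [hPd, hQd]; linarith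
  have hlt : policy φ (θt t) ystar * (rG ystar - V t)
      < policy φ (θt t) ybad * (V t - rG ybad) := by
    have := mul_lt_mul_of_pos_left hQP p2
    exact lt_of_mul_lt_mul_right (hb.trans this) hP.le
  have hpos : 0 < policy φ (θt t) ymed * (rG ymed - expReward φ rG (θt t)) := by
    simp only [hVd] at hlt
    linarith
  have := pos_of_mul_pos_right hpos (policy_pos φ (θt t) ymed).le
  linarith
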